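/- arXiv:0807.1333 — 3 statements merged into one kernel-verified Lean document; each statement's English description precedes it below -/
import Mathlib

section
/- Let r ∈ [0,1]. For every Hermitian matrix F ∈ M₂(ℂ) with Tr(F²) = 1/2 and every eigenvalue λ of the matrix 2F², one has (1/2)·[ h(2·Re Tr(F²·ρ₊)) + h(2·Re Tr(F²·ρ×)) ] + h((1+r)/2) − h(r·λ + (1−r)/2) ≥ min(1/2, h((1+r)/2)), where ρ₊ = !![1,0;0,0] and ρ× = !![1/2,1/2;1/2,1/2]. -/
/-!
In Bloch coordinates `2F² = (1 + a·σ)/2` with `a = (x, y, z)`, the two measured probabilities are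
`(1 + z)/2` and `(1 + x)/2`, and `t = 2λ - 1 = ±|a|`, so that `x² + z² ≤ t² ≤ 1`.

The entropy deficit `1 - h((1 + x)/2)` is a power series in `x²` with nonnegative coefficients and
no constant term, hence superadditive in `x²`; this gives `h((1 + z)/2) + h((1 + x)/2) ≥
1 + h((1 + t)/2)`. What remains is the one-parameter inequality
`(1 + h((1 + t)/2))/2 + h((1 + r)/2) - h((1 + rt)/2) ≥ min(1/2, h((1 + r)/2))`. Its left side, up to
a constant, is a power series in `t²` whose coefficients are proportional to `r^(2k+2) - 1/2`, and
so change sign at most once, from `+` to `-`: on `[0, 1]` such a series is at least the smaller of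
its values at the endpoints.
-/

open Matrix

/-- The base-2 binary entropy function `h(p) = -p·log₂ p - (1-p)·log₂(1-p)`. -/
noncomputable def binEnt (p : ℝ) : ℝ := -(p * Real.logb 2 p) - (1 - p) * Real.logb 2 (1 - p)

/-- The BB84 state `ρ₊ = |0⟩⟨0|`. -/
noncomputable def rhoPlus : Matrix (Fin 2) (Fin 2) ℂ := !![1, 0; 0, 0]

/-- The BB84 state `ρ× = |+⟩⟨+|`. -/
noncomputable def rhoTimes : Matrix (Fin 2) (Fin 2) ℂ := !![1/2, 1/2; 1/2, 1/2]

section Series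

lemma min_zero_le_of_hasSum_mul_antitone {b p : ℕ → ℝ} {A S : ℝ}
    (hb : ∀ j k, j ≤ k → b j < 0 → b k ≤ 0) (hp : Antitone p) (hp0 : ∀ k, 0 ≤ p k)
    (hp1 : ∀ k, p k ≤ 1) (hA : HasSum b A) (hS : HasSum (fun k => b k * p k) S) :
    min A 0 ≤ S := by
  by_cases hneg : ∃ k, b k < 0
  swap
  · push Not at hneg
    exact (min_le_right A 0).trans (hS.nonneg fun k => mul_nonneg (hneg k) (hp0 k))
  classical
  let K := Nat.find hneg
  -- Replacing `p k` by `p K` decreases every term, because `b` changes sign at `K`.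
  have hterm (k : ℕ) : b k * p K ≤ b k * p k := by
    rcases lt_or_ge k K with hk | hk
    · exact mul_le_mul_of_nonneg_left (hp hk.le) (not_lt.1 (Nat.find_min hneg hk))
    · exact mul_le_mul_of_nonpos_left (hp hk) (hb K k hk (Nat.find_spec hneg))
  calc min A 0 ≤ A * p K := by
        rcases le_total 0 A with h | h
        · exact (min_le_right _ _).trans (mul_nonneg h (hp0 K))
        · exact (min_le_left _ _).trans (le_mul_of_le_one_right h (hp1 K))
    _ ≤ S := hasSum_le hterm (hA.mul_right (p K)) hS

end Series

section BinaryEntropy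

/-- The coefficient of `(x²) ^ (k + 1)` in the expansion of `log 2 - binEntropy ((1 + x) / 2)`. -/
noncomputable def binEntropyCoeff (k : ℕ) : ℝ := 1 / ((2 * k + 1) * (2 * k + 2))

lemma binEntropyCoeff_nonneg (k : ℕ) : 0 ≤ binEntropyCoeff k := by
  unfold binEntropyCoeff; positivity

lemma summable_binEntropyCoeff : Summable binEntropyCoeff := by
  have hsq : Summable fun k : ℕ => 1 / ((k + 1 : ℕ) : ℝ) ^ 2 :=
    (summable_nat_add_iff 1).2 (Real.summable_one_div_nat_pow.2 one_lt_two)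
  refine hsq.of_nonneg_of_le binEntropyCoeff_nonneg fun k => ?_
  refine one_div_le_one_div_of_le (by positivity) ?_
  push_cast
  nlinarith [k.cast_nonneg (α := ℝ)]

lemma log_two_sub_binEntropy_one_add_div_two {x : ℝ} (hx : |x| < 1) :
    Real.log 2 - Real.binEntropy ((1 + x) / 2) =
      x / 2 * (Real.log (1 + x) - Real.log (1 - x)) + 1 / 2 * Real.log (1 - x ^ 2) := by
  obtain ⟨hl, hu⟩ := abs_lt.1 hx
  have hplus : 1 + x ≠ 0 := by linarith
  have hminus : 1 - x ≠ 0 := by linarith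
  have hfactor : 1 - x ^ 2 = (1 + x) * (1 - x) := by ring
  have hcompl : 1 - (1 + x) / 2 = (1 - x) / 2 := by ring
  rw [Real.binEntropy, hcompl, hfactor, Real.log_mul hplus hminus, Real.log_inv, Real.log_inv,
    Real.log_div hplus two_ne_zero, Real.log_div hminus two_ne_zero]
  ring

lemma hasSum_log_two_sub_binEntropy_of_abs_lt_one {x : ℝ} (hx : |x| < 1) :
    HasSum (fun k => binEntropyCoeff k * (x ^ 2) ^ (k + 1))
      (Real.log 2 - Real.binEntropy ((1 + x) / 2)) := by
  have hx2 : |x ^ 2| < 1 := by simpa using pow_lt_one₀ (abs_nonneg x) hx two_ne_zero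
  have hodd := (Real.hasSum_log_sub_log_of_abs_lt_one hx).mul_left (x / 2)
  have heven := (Real.hasSum_pow_div_log_of_abs_lt_one hx2).mul_left (1 / 2)
  rw [log_two_sub_binEntropy_one_add_div_two hx, ← sub_neg_eq_add, ← mul_neg]
  refine (hodd.sub heven).congr_fun fun k => ?_
  rw [binEntropyCoeff]
  field_simp
  ring

/-- The endpoints `x = ±1` are reached by continuity, since the coefficients are summable. -/
lemma hasSum_log_two_sub_binEntropy {x : ℝ} (hx : x ^ 2 ≤ 1) :
    HasSum (fun k => binEntropyCoeff k * (x ^ 2) ^ (k + 1))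
      (Real.log 2 - Real.binEntropy ((1 + x) / 2)) := by
  let term (k : ℕ) (y : ℝ) : ℝ := binEntropyCoeff k * (y ^ 2) ^ (k + 1)
  have hbound (k : ℕ) {y : ℝ} (hy : y ^ 2 ≤ 1) : ‖term k y‖ ≤ binEntropyCoeff k := by
    rw [Real.norm_of_nonneg (mul_nonneg (binEntropyCoeff_nonneg k) (by positivity))]
    exact mul_le_of_le_one_right (binEntropyCoeff_nonneg k) (pow_le_one₀ (sq_nonneg y) hy)
  have hseries : ContinuousOn (fun y => ∑' k, term k y) (Set.Icc (-1) 1) :=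
    continuousOn_tsum (fun k => by fun_prop) summable_binEntropyCoeff
      fun k y hy => hbound k ((sq_le_one_iff_abs_le_one y).2 (abs_le.2 hy))
  have hentropy : ContinuousOn (fun y => Real.log 2 - Real.binEntropy ((1 + y) / 2))
      (Set.Icc (-1) 1) := by
    fun_prop
  have hinterior : Set.EqOn (fun y => ∑' k, term k y)
      (fun y => Real.log 2 - Real.binEntropy ((1 + y) / 2)) (Set.Ioo (-1) 1) :=
    fun y hy => (hasSum_log_two_sub_binEntropy_of_abs_lt_one (abs_lt.2 hy)).tsum_eq
  have heq := hinterior.of_subset_closure hseries hentropy Set.Ioo_subset_Icc_self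
    (closure_Ioo (by norm_num)).ge (abs_le.1 ((sq_le_one_iff_abs_le_one x).1 hx))
  have hsummable : Summable fun k => term k x :=
    summable_binEntropyCoeff.of_norm_bounded fun k => hbound k hx
  exact hsummable.hasSum_iff.2 heq

lemma log_two_add_binEntropy_le {x z t : ℝ} (hxz : z ^ 2 + x ^ 2 ≤ t ^ 2) (ht : t ^ 2 ≤ 1) :
    Real.log 2 + Real.binEntropy ((1 + t) / 2) ≤
      Real.binEntropy ((1 + z) / 2) + Real.binEntropy ((1 + x) / 2) := by
  have hz := hasSum_log_two_sub_binEntropy (x := z) (by linarith [sq_nonneg x])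
  have hx := hasSum_log_two_sub_binEntropy (x := x) (by linarith [sq_nonneg z])
  have hterm (k : ℕ) : binEntropyCoeff k * (z ^ 2) ^ (k + 1) + binEntropyCoeff k * (x ^ 2) ^ (k + 1)
      ≤ binEntropyCoeff k * (t ^ 2) ^ (k + 1) := by
    rw [← mul_add]
    refine mul_le_mul_of_nonneg_left ?_ (binEntropyCoeff_nonneg k)
    calc (z ^ 2) ^ (k + 1) + (x ^ 2) ^ (k + 1) ≤ (z ^ 2 + x ^ 2) ^ (k + 1) :=
          pow_add_pow_le (sq_nonneg z) (sq_nonneg x) k.succ_ne_zero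
      _ ≤ (t ^ 2) ^ (k + 1) := by gcongr
  linarith [hasSum_le hterm (hz.add hx) (hasSum_log_two_sub_binEntropy ht)]

lemma min_le_binEntropy_add_sub {r t : ℝ} (hr : r ^ 2 ≤ 1) (ht : t ^ 2 ≤ 1) :
    min (Real.log 2 / 2) (Real.binEntropy ((1 + r) / 2)) ≤
      (Real.log 2 + Real.binEntropy ((1 + t) / 2)) / 2 + Real.binEntropy ((1 + r) / 2)
        - Real.binEntropy ((1 + r * t) / 2) := by
  have hrt : (r * t) ^ 2 ≤ 1 := by
    rw [mul_pow]; exact mul_le_one₀ hr (sq_nonneg t) ht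
  let b (k : ℕ) : ℝ := binEntropyCoeff k * ((r ^ 2) ^ (k + 1) - 1 / 2)
  have hsign (j k : ℕ) (hjk : j ≤ k) (hj : b j < 0) : b k ≤ 0 := by
    have hpow : (r ^ 2) ^ (k + 1) ≤ (r ^ 2) ^ (j + 1) :=
      pow_le_pow_of_le_one (sq_nonneg r) hr (by omega)
    refine mul_nonpos_of_nonneg_of_nonpos (binEntropyCoeff_nonneg k) ?_
    linarith [neg_of_mul_neg_right hj (binEntropyCoeff_nonneg j)]
  have hvalue_one : HasSum b
      (Real.log 2 - Real.binEntropy ((1 + r) / 2) - Real.log 2 / 2) := by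
    have hone := hasSum_log_two_sub_binEntropy (x := 1) (by norm_num)
    norm_num only [one_pow, mul_one, Real.binEntropy_one, sub_zero] at hone
    refine ((hasSum_log_two_sub_binEntropy hr).sub (hone.div_const 2)).congr_fun fun k => ?_
    simp only [b]
    ring
  have hvalue : HasSum (fun k => b k * (t ^ 2) ^ (k + 1))
      (Real.log 2 - Real.binEntropy ((1 + r * t) / 2)
        - (Real.log 2 - Real.binEntropy ((1 + t) / 2)) / 2) := by
    refine ((hasSum_log_two_sub_binEntropy hrt).sub
      ((hasSum_log_two_sub_binEntropy ht).div_const 2)).congr_fun fun k => ?_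
    simp only [b, mul_pow]
    ring
  have hmin := min_zero_le_of_hasSum_mul_antitone hsign
    (fun _ _ hjk => pow_le_pow_of_le_one (sq_nonneg t) ht (Nat.succ_le_succ hjk))
    (fun k => pow_nonneg (sq_nonneg t) _) (fun k => pow_le_one₀ (sq_nonneg t) ht) hvalue_one hvalue
  rw [min_le_iff] at hmin ⊢
  exact hmin.imp (fun h => by linarith) (fun h => by linarith)

lemma binEnt_eq_binEntropy_div_log_two (p : ℝ) : binEnt p = Real.binEntropy p / Real.log 2 := by
  simp only [binEnt, Real.binEntropy, Real.logb, Real.log_inv]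
  ring

lemma min_le_half_mul_binEnt_add_sub {r x z t : ℝ} (hr : r ^ 2 ≤ 1) (hxz : z ^ 2 + x ^ 2 ≤ t ^ 2)
    (ht : t ^ 2 ≤ 1) :
    min (1 / 2) (binEnt ((1 + r) / 2)) ≤
      1 / 2 * (binEnt ((1 + z) / 2) + binEnt ((1 + x) / 2))
        + binEnt ((1 + r) / 2) - binEnt ((1 + r * t) / 2) := by
  have hlog : 0 < Real.log 2 := Real.log_pos one_lt_two
  have hhalf : (1 / 2 : ℝ) = Real.log 2 / 2 / Real.log 2 := by field_simp
  have hnats : min (Real.log 2 / 2) (Real.binEntropy ((1 + r) / 2)) ≤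
      1 / 2 * (Real.binEntropy ((1 + z) / 2) + Real.binEntropy ((1 + x) / 2))
        + Real.binEntropy ((1 + r) / 2) - Real.binEntropy ((1 + r * t) / 2) := by
    linarith [log_two_add_binEntropy_le hxz ht, min_le_binEntropy_add_sub hr ht]
  simp only [binEnt_eq_binEntropy_div_log_two]
  calc min (1 / 2) (Real.binEntropy ((1 + r) / 2) / Real.log 2)
      = min (Real.log 2 / 2) (Real.binEntropy ((1 + r) / 2)) / Real.log 2 := by
        rw [hhalf, min_div_div_right hlog.le]
    _ ≤ _ := div_le_div_of_nonneg_right hnats hlog.le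
    _ = _ := by ring

end BinaryEntropy

section TwoByTwo

open scoped ComplexOrder

lemma sq_two_mul_sub_trace_eq_discr {R : Type*} [CommRing R] [IsDomain R]
    {A : Matrix (Fin 2) (Fin 2) R} {μ : R} {v : Fin 2 → R} (hv : v ≠ 0) (hAv : A *ᵥ v = μ • v) :
    (2 * μ - A.trace) ^ 2 = A.discr := by
  have hdet : (A - μ • (1 : Matrix (Fin 2) (Fin 2) R)).det = 0 :=
    Matrix.exists_mulVec_eq_zero_iff.1
      ⟨v, hv, by rw [sub_mulVec, hAv, smul_mulVec, one_mulVec, sub_self]⟩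
  have hchar : (A 0 0 - μ) * (A 1 1 - μ) - A 0 1 * A 1 0 = 0 := by simpa [det_fin_two] using hdet
  rw [discr_fin_two, trace_fin_two, det_fin_two]
  linear_combination 4 * hchar

variable {A : Matrix (Fin 2) (Fin 2) ℂ}

lemma discr_eq_of_isHermitian (hA : A.IsHermitian) :
    A.discr = (((A 0 0).re - (A 1 1).re) ^ 2 + 4 * Complex.normSq (A 0 1) : ℝ) := by
  have h00 : ((A 0 0).re : ℂ) = A 0 0 := hA.coe_re_apply_self 0
  have h11 : ((A 1 1).re : ℂ) = A 1 1 := hA.coe_re_apply_self 1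
  have h10 : A 1 0 = starRingEnd ℂ (A 0 1) := (hA.apply 1 0).symm
  push_cast
  rw [h00, h11, ← Complex.mul_conj, discr_fin_two, trace_fin_two, det_fin_two, h10]
  ring

lemma trace_mul_rhoPlus : (A * rhoPlus).trace = A 0 0 := by
  simp [rhoPlus, trace_fin_two, mul_apply]

lemma two_mul_trace_mul_rhoTimes : 2 * (A * rhoTimes).trace = A.trace + A 0 1 + A 1 0 := by
  simp only [rhoTimes, trace_fin_two, mul_apply, Fin.sum_univ_two, of_apply, cons_val]
  ring

lemma sq_add_sq_le_discr_re_of_isHermitian (hA : A.IsHermitian) :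
    (2 * (A * rhoPlus).trace.re - A.trace.re) ^ 2
      + (2 * (A * rhoTimes).trace.re - A.trace.re) ^ 2 ≤ A.discr.re := by
  have hplus : 2 * (A * rhoPlus).trace.re - A.trace.re = (A 0 0).re - (A 1 1).re := by
    rw [trace_mul_rhoPlus, trace_fin_two, Complex.add_re]
    ring
  have htimes : 2 * (A * rhoTimes).trace.re - A.trace.re = 2 * (A 0 1).re := by
    have h10 : (A 1 0).re = (A 0 1).re := by rw [← hA.apply 1 0]; rfl
    have hre : 2 * (A * rhoTimes).trace.re = A.trace.re + (A 0 1).re + (A 1 0).re := by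
      simpa using congrArg Complex.re (two_mul_trace_mul_rhoTimes (A := A))
    linarith
  rw [hplus, htimes, discr_eq_of_isHermitian hA, Complex.ofReal_re, Complex.normSq_apply]
  linarith [sq_nonneg (A 0 1).im]

lemma discr_le_trace_sq_of_posSemidef {𝕜 : Type*} [RCLike 𝕜] {B : Matrix (Fin 2) (Fin 2) 𝕜}
    (hB : B.PosSemidef) : B.discr ≤ B.trace ^ 2 := by
  rw [discr_fin_two]
  exact sub_le_self _ (mul_nonneg zero_le_four hB.det_nonneg)

lemma posSemidef_mul_self_of_isHermitian {n R : Type*} [Fintype n] [Ring R] [PartialOrder R]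
    [StarRing R] [StarOrderedRing R] {B : Matrix n n R} (hB : B.IsHermitian) :
    (B * B).PosSemidef := by
  simpa only [hB.eq] using posSemidef_conjTranspose_mul_self B

theorem stmt_0_general {r : ℝ} (hr : |r| ≤ 1) {ρ : Matrix (Fin 2) (Fin 2) ℂ}
    (hρ : ρ.PosSemidef) (htr : ρ.trace = 1) {lam : ℝ}
    (hlam : ∃ v : Fin 2 → ℂ, v ≠ 0 ∧ ρ *ᵥ v = (lam : ℂ) • v) :
    min (1 / 2) (binEnt ((1 + r) / 2)) ≤
      1 / 2 * (binEnt (ρ * rhoPlus).trace.re + binEnt (ρ * rhoTimes).trace.re)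
        + binEnt ((1 + r) / 2) - binEnt (r * lam + (1 - r) / 2) := by
  obtain ⟨v, hv, hρv⟩ := hlam
  have hdiscr : ρ.discr.re = (2 * lam - 1) ^ 2 := by
    rw [← sq_two_mul_sub_trace_eq_discr hv hρv, htr]
    norm_cast
  have hbloch := sq_add_sq_le_discr_re_of_isHermitian hρ.isHermitian
  have hball : ρ.discr.re ≤ 1 := by
    simpa [htr] using Complex.re_le_re (discr_le_trace_sq_of_posSemidef hρ)
  rw [hdiscr] at hbloch hball
  rw [htr, Complex.one_re] at hbloch
  convert min_le_half_mul_binEnt_add_sub ((sq_le_one_iff_abs_le_one r).2 hr) hbloch hball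
    using 4 <;> ring_nf

end TwoByTwo

/-- For `r ∈ [0,1]`, every Hermitian `F ∈ M₂(ℂ)` with `Tr(F²) = 1/2` and every
eigenvalue `λ` of `2F²`, one has
`(1/2)·[h(2·Re Tr(F²ρ₊)) + h(2·Re Tr(F²ρ×))] + h((1+r)/2) - h(rλ + (1-r)/2)
  ≥ min(1/2, h((1+r)/2))`. -/
theorem stmt_0 (r : ℝ) (hr : r ∈ Set.Icc (0 : ℝ) 1)
    (F : Matrix (Fin 2) (Fin 2) ℂ) (hF : F.IsHermitian)
    (htr : (F * F).trace = 1 / 2)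
    (lam : ℝ)
    (hlam : ∃ v : Fin 2 → ℂ, v ≠ 0 ∧ ((2 : ℂ) • (F * F)) *ᵥ v = (lam : ℂ) • v) :
    (1 / 2) * (binEnt (2 * ((F * F * rhoPlus).trace).re)
        + binEnt (2 * ((F * F * rhoTimes).trace).re))
      + binEnt ((1 + r) / 2) - binEnt (r * lam + (1 - r) / 2)
      ≥ min (1 / 2) (binEnt ((1 + r) / 2)) := by
  open scoped ComplexOrder in
  simpa using stmt_0_general (abs_le.2 ⟨by linarith [hr.1], hr.2⟩)
    ((posSemidef_mul_self_of_isHermitian hF).smul zero_le_two) (by simp [htr]) hlam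
end

section
/- For all r ∈ [0,1], the second derivative of the function α ↦ t(r,α) at α = 1/2 equals 8·(2r² − 1)/ln 2. In particular this second derivative is negative for r < 1/√2 (so α = 1/2 is a local maximum of t(r,·)) and positive for r > 1/√2 (so α = 1/2 is a local minimum of t(r,·)). -/
/-- `g(r,α) = h((1+r)/2 - 2α²r)`. -/
noncomputable def gFun (r α : ℝ) : ℝ := binEnt ((1 + r) / 2 - 2 * α ^ 2 * r)

/-- `t(r,α) = (1 + g(1,α))/2 + h((1+r)/2) - g(r,α)`. -/
noncomputable def tFun (r α : ℝ) : ℝ :=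
  (1 + gFun 1 α) / 2 + binEnt ((1 + r) / 2) - gFun r α

/-! At `α = 1/2` the argument `(1+r)/2 - 2α²r` of the entropy equals `1/2` for every `r`, and
`h'(1/2) = 0`, `h''(1/2) = -4/ln 2`. By the second-order chain rule `∂g/∂α` vanishes there and
`∂²g/∂α² = (2r)²·h''(1/2) = -16r²/ln 2`. Hence `α = 1/2` is a critical point of `t(r,·)` with
second derivative `8(2r² - 1)/ln 2`, and the second derivative test applies. -/

theorem abs_lt_one_div_sqrt_iff {a r : ℝ} (ha : 0 < a) : |r| < 1 / √a ↔ a * r ^ 2 < 1 := by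
  rw [one_div, ← Real.sqrt_inv, Real.lt_sqrt (abs_nonneg r), sq_abs, ← one_div, lt_div_iff₀' ha]

theorem one_div_sqrt_lt_abs_iff {a r : ℝ} (ha : 0 < a) : 1 / √a < |r| ↔ 1 < a * r ^ 2 := by
  rw [one_div, ← Real.sqrt_inv, Real.sqrt_lt (inv_nonneg.mpr ha.le) (abs_nonneg r), sq_abs,
    ← one_div, div_lt_iff₀' ha]

theorem binEnt_eq_binEntropy_div : binEnt = fun p ↦ Real.binEntropy p / Real.log 2 := by
  funext p
  simp only [binEnt, Real.binEntropy, Real.logb, Real.log_inv]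
  ring

theorem contDiffAt_binEnt {n : WithTop ℕ∞} {p : ℝ} (h₀ : p ≠ 0) (h₁ : p ≠ 1) :
    ContDiffAt ℝ n binEnt p := by
  have h₁' : 1 - p ≠ 0 := sub_ne_zero.mpr h₁.symm
  unfold binEnt Real.logb
  fun_prop (disch := assumption)

theorem deriv_binEnt (p : ℝ) :
    deriv binEnt p = (Real.log (1 - p) - Real.log p) / Real.log 2 := by
  rw [binEnt_eq_binEntropy_div, deriv_div_const, Real.deriv_binEntropy]

theorem iteratedDeriv_two_binEnt (p : ℝ) :
    iteratedDeriv 2 binEnt p = -1 / (p * (1 - p)) / Real.log 2 := by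
  rw [binEnt_eq_binEntropy_div, iteratedDeriv_div_const, iteratedDeriv_eq_iterate,
    Real.deriv2_binEntropy]

theorem deriv_binEnt_one_half : deriv binEnt (1 / 2) = 0 := by
  rw [deriv_binEnt]
  norm_num

/-- The argument `(1+r)/2 - 2α²r` at which `g(r,α)` evaluates the binary entropy. -/
noncomputable def entropyArg (r α : ℝ) : ℝ := (1 + r) / 2 - 2 * α ^ 2 * r

theorem gFun_eq_binEnt_comp_entropyArg (r : ℝ) : gFun r = binEnt ∘ entropyArg r := rfl

theorem entropyArg_one_half (r : ℝ) : entropyArg r (1 / 2) = 1 / 2 := by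
  unfold entropyArg
  ring

theorem contDiff_entropyArg {n : WithTop ℕ∞} (r : ℝ) : ContDiff ℝ n (entropyArg r) := by
  unfold entropyArg
  fun_prop

theorem deriv_entropyArg (r α : ℝ) : deriv (entropyArg r) α = -(4 * r * α) := by
  unfold entropyArg
  rw [deriv_const_sub, deriv_mul_const_field, deriv_const_mul_field, deriv_pow_field]
  push_cast
  ring

section OneHalf

variable (r : ℝ) {n : WithTop ℕ∞}

theorem contDiffAt_binEnt_entropyArg_one_half : ContDiffAt ℝ n binEnt (entropyArg r (1 / 2)) := by
  rw [entropyArg_one_half]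
  exact contDiffAt_binEnt (by norm_num) (by norm_num)

theorem contDiffAt_gFun_one_half : ContDiffAt ℝ n (gFun r) (1 / 2) :=
  (contDiffAt_binEnt_entropyArg_one_half r).comp _ (contDiff_entropyArg r).contDiffAt

theorem deriv_gFun_one_half : deriv (gFun r) (1 / 2) = 0 := by
  rw [gFun_eq_binEnt_comp_entropyArg,
    deriv_comp _ ((contDiffAt_binEnt_entropyArg_one_half r).differentiableAt one_ne_zero)
      ((contDiff_entropyArg r).differentiable one_ne_zero _),
    entropyArg_one_half, deriv_binEnt_one_half, zero_mul]

theorem iteratedDeriv_two_gFun_one_half :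
    iteratedDeriv 2 (gFun r) (1 / 2) = -16 * r ^ 2 / Real.log 2 := by
  rw [gFun_eq_binEnt_comp_entropyArg,
    iteratedDeriv_comp_two (contDiffAt_binEnt_entropyArg_one_half r)
      (contDiff_entropyArg r).contDiffAt,
    entropyArg_one_half, deriv_binEnt_one_half, iteratedDeriv_two_binEnt, deriv_entropyArg]
  ring

theorem tFun_eq_const_add :
    tFun r = fun α ↦ (1 / 2 + binEnt ((1 + r) / 2)) + (gFun 1 α / 2 - gFun r α) := by
  funext α
  unfold tFun
  ring

theorem contDiffAt_tFun_one_half : ContDiffAt ℝ n (tFun r) (1 / 2) := by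
  rw [tFun_eq_const_add]
  exact contDiffAt_const.add
    (((contDiffAt_gFun_one_half 1).div_const 2).sub (contDiffAt_gFun_one_half r))

theorem deriv_tFun_one_half : deriv (tFun r) (1 / 2) = 0 := by
  have hg (s : ℝ) : DifferentiableAt ℝ (gFun s) (1 / 2) :=
    (contDiffAt_gFun_one_half s).differentiableAt one_ne_zero
  rw [tFun_eq_const_add, deriv_const_add, deriv_fun_sub ((hg 1).div_const 2) (hg r),
    deriv_div_const, deriv_gFun_one_half, deriv_gFun_one_half, zero_div, sub_zero]

theorem deriv_deriv_tFun_one_half :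
    deriv (deriv (tFun r)) (1 / 2) = 8 * (2 * r ^ 2 - 1) / Real.log 2 := by
  have iteratedDeriv_two : iteratedDeriv 2 (tFun r) = deriv (deriv (tFun r)) := by
    rw [iteratedDeriv_succ, iteratedDeriv_one]
  rw [← iteratedDeriv_two, tFun_eq_const_add, iteratedDeriv_const_add two_pos,
    iteratedDeriv_fun_sub ((contDiffAt_gFun_one_half 1).div_const 2) (contDiffAt_gFun_one_half r),
    iteratedDeriv_div_const, iteratedDeriv_two_gFun_one_half, iteratedDeriv_two_gFun_one_half]
  ring

end OneHalf

/-- For `|r| > 1` the entropy `h((1+r)/2)` takes a junk value, which shifts `t(r,·)` by a constant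
and leaves its derivatives and extrema unchanged. -/
theorem stmt_4_general (r : ℝ) :
    deriv (deriv (tFun r)) (1 / 2) = 8 * (2 * r ^ 2 - 1) / Real.log 2
    ∧ (|r| < 1 / √2 → deriv (deriv (tFun r)) (1 / 2) < 0 ∧ IsLocalMax (tFun r) (1 / 2))
    ∧ (1 / √2 < |r| → 0 < deriv (deriv (tFun r)) (1 / 2) ∧ IsLocalMin (tFun r) (1 / 2)) := by
  have hlog : 0 < Real.log 2 := Real.log_pos one_lt_two
  have hcont : ContinuousAt (tFun r) (1 / 2) := (contDiffAt_tFun_one_half r (n := 0)).continuousAt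
  refine ⟨deriv_deriv_tFun_one_half r, fun hr ↦ ?_, fun hr ↦ ?_⟩
  · rw [abs_lt_one_div_sqrt_iff two_pos] at hr
    have hneg : deriv (deriv (tFun r)) (1 / 2) < 0 := by
      rw [deriv_deriv_tFun_one_half]
      exact div_neg_of_neg_of_pos (by linarith) hlog
    exact ⟨hneg, isLocalMax_of_deriv_deriv_neg hneg (deriv_tFun_one_half r) hcont⟩
  · rw [one_div_sqrt_lt_abs_iff two_pos] at hr
    have hpos : 0 < deriv (deriv (tFun r)) (1 / 2) := by
      rw [deriv_deriv_tFun_one_half]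
      exact div_pos (by linarith) hlog
    exact ⟨hpos, isLocalMin_of_deriv_deriv_pos hpos (deriv_tFun_one_half r) hcont⟩

/-- For all `r ∈ [0,1]`, the second derivative of `α ↦ t(r,α)` at `α = 1/2`
equals `8(2r² - 1)/ln 2`. In particular, it is negative for `r < 1/√2`
(so `α = 1/2` is a local maximum of `t(r,·)`) and positive for `r > 1/√2`
(so `α = 1/2` is a local minimum of `t(r,·)`). -/
theorem stmt_4 (r : ℝ) (hr : r ∈ Set.Icc (0 : ℝ) 1) :
    deriv (deriv (fun α => tFun r α)) (1 / 2) = 8 * (2 * r ^ 2 - 1) / Real.log 2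
    ∧ (r < 1 / Real.sqrt 2 →
        deriv (deriv (fun α => tFun r α)) (1 / 2) < 0 ∧ IsLocalMax (fun α => tFun r α) (1 / 2))
    ∧ (1 / Real.sqrt 2 < r →
        0 < deriv (deriv (fun α => tFun r α)) (1 / 2) ∧ IsLocalMin (fun α => tFun r α) (1 / 2)) := by
  simpa only [abs_of_nonneg hr.1] using stmt_4_general r
end

section
/- Let a, b, a′, b′ be finite nonempty types, let ρ be a positive semidefinite matrix indexed by a × b and ρ′ a positive semidefinite matrix indexed by a′ × b′. Define m(ρ) := inf { Re Tr(σ) : σ a positive semidefinite matrix indexed by b such that 1_a ⊗ σ − ρ is positive semidefinite }, and define m(ρ′) analogously. Let ρ ⊗ ρ′ denote the Kronecker product, reindexed along the bijection (a × b) × (a′ × b′) ≃ (a × a′) × (b × b′). Then for every positive semidefinite matrix τ indexed by b × b′ such that 1_{a×a′} ⊗ τ − (ρ ⊗ ρ′) is positive semidefinite, one has Re Tr(τ) ≥ m(ρ) · m(ρ′). Equivalently, m(ρ ⊗ ρ′) ≥ m(ρ) · m(ρ′). -/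
open Matrix Kronecker ComplexOrder

/-!
Weak duality for the product program and strong duality for each factor give the inequality.

The optimal value `m` is a sublinear function of Hermitian matrices, so by Hahn–Banach some real
functional `g ≤ m` touches `m` at `ρ`. Writing `g = Re Tr (E ·)` with `E` Hermitian, the bound
`m(-Q) ≤ 0` for `Q ≥ 0` gives `E ≥ 0`, and `m(1 ⊗ σ) ≤ Tr σ` gives `Tr_A E ≤ 1`: `E` is an optimal
dual solution. If `E` and `E'` are dual feasible, then so is `E ⊗ E'`: its partial trace is
`X ⊗ Y` for the partial traces `X`, `Y` of the factors, and
`1 - X ⊗ Y = (1 - X) ⊗ 1 + X ⊗ (1 - Y) ≥ 0`. Its objective value at `ρ ⊗ ρ'` is the product of the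
objective values at `ρ` and `ρ'`.
-/

theorem exists_linearMap_le_sublinear_apply_eq {E : Type*} [AddCommGroup E] [Module ℝ E]
    {N : E → ℝ} (hN_smul : ∀ c : ℝ, 0 < c → ∀ x, N (c • x) = c * N x)
    (hN_add : ∀ x y, N (x + y) ≤ N x + N y) (x : E) :
    ∃ g : E →ₗ[ℝ] ℝ, (∀ y, g y ≤ N y) ∧ g x = N x := by
  have hN_zero : N 0 = 0 := by
    have := hN_smul 2 two_pos 0
    rw [smul_zero] at this
    linarith
  have hx_smul (c : ℝ) (hc : c • x = 0) : (RingHom.id ℝ) c • N x = 0 := by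
    rcases smul_eq_zero.mp hc with rfl | rfl <;> simp [hN_zero]
  have hN_line (c : ℝ) : c * N x ≤ N (c • x) := by
    rcases lt_trichotomy c 0 with hc | rfl | hc
    · have h_neg := hN_smul (-c) (neg_pos.mpr hc) x
      have h_add := hN_add (c • x) (-c • x)
      rw [← add_smul, add_neg_cancel, zero_smul, hN_zero] at h_add
      linarith
    · simp [hN_zero]
    · exact (hN_smul c hc x).ge
  obtain ⟨g, hg_ext, hg_le⟩ := exists_extension_of_le_sublinear
    (LinearPMap.mkSpanSingleton' x (N x) hx_smul) N hN_smul hN_add (by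
      rintro ⟨y, hy⟩
      obtain ⟨c, rfl⟩ := Submodule.mem_span_singleton.mp hy
      exact (LinearPMap.mkSpanSingleton'_apply x (N x) hx_smul c _).trans_le (hN_line c))
  exact ⟨g, hg_le, (hg_ext ⟨x, Submodule.mem_span_singleton_self x⟩).trans
    (LinearPMap.mkSpanSingleton'_apply_self x (N x) hx_smul _)⟩

section TracePairing

variable {𝕜 n : Type*} [RCLike 𝕜] [Fintype n]

open MatrixOrder in
theorem re_trace_mul_nonneg_of_posSemidef {A B : Matrix n n 𝕜}
    (hA : A.PosSemidef) (hB : B.PosSemidef) : 0 ≤ RCLike.re (A * B).trace := by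
  classical
  obtain ⟨C, rfl⟩ := CStarAlgebra.nonneg_iff_eq_star_mul_self.mp hA.nonneg
  rw [star_eq_conjTranspose, Matrix.mul_assoc, Matrix.trace_mul_comm]
  exact (RCLike.nonneg_iff.mp (hB.mul_mul_conjTranspose_same C).trace_nonneg).1

theorem posSemidef_of_re_trace_mul_nonneg {M : Matrix n n 𝕜} (hM : M.IsHermitian)
    (h : ∀ σ : Matrix n n 𝕜, σ.PosSemidef → 0 ≤ RCLike.re (M * σ).trace) : M.PosSemidef := by
  refine .of_dotProduct_mulVec_nonneg hM fun v => RCLike.nonneg_iff.mpr ⟨?_, ?_⟩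
  · simpa only [mul_vecMulVec, trace_vecMulVec, dotProduct_comm] using
      h _ (posSemidef_vecMulVec_self_star v)
  · exact hM.im_star_dotProduct_mulVec_self v

theorem im_trace_mul_eq_zero_of_isHermitian {A B : Matrix n n 𝕜}
    (hA : A.IsHermitian) (hB : B.IsHermitian) : RCLike.im (A * B).trace = 0 := by
  rw [← RCLike.conj_eq_iff_im, starRingEnd_apply, ← trace_conjTranspose, conjTranspose_mul,
    hA.eq, hB.eq, trace_mul_comm]

theorem exists_isHermitian_re_trace_mul_eq (g : selfAdjoint (Matrix n n 𝕜) →ₗ[ℝ] ℝ) :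
    ∃ E : Matrix n n 𝕜, E.IsHermitian ∧
      ∀ H : selfAdjoint (Matrix n n 𝕜), RCLike.re (E * H.1).trace = g H := by
  let pairing : selfAdjoint (Matrix n n 𝕜) →ₗ[ℝ] Module.Dual ℝ (selfAdjoint (Matrix n n 𝕜)) :=
    LinearMap.mk₂ ℝ (fun E H => RCLike.re (E.1 * H.1).trace)
      (fun _ _ _ => by simp [add_mul]) (fun _ _ _ => by simp [RCLike.smul_re])
      (fun _ _ _ => by simp [mul_add]) (fun _ _ _ => by simp [RCLike.smul_re])
  have h_inj : Function.Injective pairing := by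
    refine (injective_iff_map_eq_zero _).mpr fun E hE => Subtype.ext ?_
    have h_re : RCLike.re (E.1ᴴ * E.1).trace = 0 := by
      rw [← star_eq_conjTranspose, E.2.star_eq]
      exact LinearMap.congr_fun hE E
    have h_nonneg := (posSemidef_conjTranspose_mul_self E.1).trace_nonneg
    exact trace_conjTranspose_mul_self_eq_zero_iff.mp
      (RCLike.ext (by simpa using h_re) (by simpa using (RCLike.nonneg_iff.mp h_nonneg).2))
  have : Module.Finite ℝ (selfAdjoint (Matrix n n 𝕜)) :=
    inferInstanceAs (Module.Finite ℝ (selfAdjoint.submodule ℝ (Matrix n n 𝕜)))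
  obtain ⟨E, rfl⟩ :=
    (LinearMap.injective_iff_surjective_of_finrank_eq_finrank Subspace.dual_finrank_eq.symm).mp
      h_inj g
  exact ⟨E, E.2, fun _ => rfl⟩

end TracePairing

open MatrixOrder in
theorem exists_posSemidef_smul_one_sub {𝕜 n : Type*} [RCLike 𝕜] [Finite n] [DecidableEq n]
    {M : Matrix n n 𝕜} (hM : M.IsHermitian) :
    ∃ c : ℝ, 0 ≤ c ∧ (c • (1 : Matrix n n 𝕜) - M).PosSemidef := by
  cases nonempty_fintype n
  obtain ⟨c, hc⟩ := (spectrum ℝ M).toFinite.bddAbove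
  refine ⟨max c 0, le_max_right _ _, ?_⟩
  rw [← Algebra.algebraMap_eq_smul_one, ← Matrix.le_iff]
  exact le_algebraMap_of_spectrum_le (fun x hx => le_max_of_le_left (hc hx)) hM

section PartialTrace

/-- The partial trace `Tr_A E` over the first tensor factor, as the sum of the diagonal blocks
of `E`. -/
def partialTraceLeft {a b R : Type*} [Fintype a] [AddCommMonoid R]
    (E : Matrix (a × b) (a × b) R) : Matrix b b R :=
  ∑ i, E.submatrix (Prod.mk i) (Prod.mk i)

variable {a b a' b' R : Type*} [Fintype a] [Fintype a']

theorem partialTraceLeft_apply [AddCommMonoid R] (E : Matrix (a × b) (a × b) R) (j l : b) :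
    partialTraceLeft E j l = ∑ i, E (i, j) (i, l) := by
  simp only [partialTraceLeft, Matrix.sum_apply, submatrix_apply]

theorem trace_mul_one_kronecker [Fintype b] [DecidableEq a] [NonAssocSemiring R]
    (E : Matrix (a × b) (a × b) R) (σ : Matrix b b R) :
    (E * ((1 : Matrix a a R) ⊗ₖ σ)).trace = (partialTraceLeft E * σ).trace := by
  calc (E * ((1 : Matrix a a R) ⊗ₖ σ)).trace
      = ∑ i, ∑ j, ∑ l, E (i, j) (i, l) * σ l j := by
        simp [trace, mul_apply, Fintype.sum_prod_type, one_apply, Finset.sum_ite_irrel]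
    _ = ∑ j, ∑ l, ∑ i, E (i, j) (i, l) * σ l j := by
        rw [Finset.sum_comm]
        exact Finset.sum_congr rfl fun j _ => Finset.sum_comm
    _ = (partialTraceLeft E * σ).trace := by
        simp only [trace, diag_apply, mul_apply, partialTraceLeft_apply, Finset.sum_mul]

theorem partialTraceLeft_reindex_kronecker [NonUnitalNonAssocSemiring R]
    (E : Matrix (a × b) (a × b) R) (E' : Matrix (a' × b') (a' × b') R) :
    partialTraceLeft (reindex (Equiv.prodProdProdComm a b a' b')
      (Equiv.prodProdProdComm a b a' b') (E ⊗ₖ E')) =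
      partialTraceLeft E ⊗ₖ partialTraceLeft E' := by
  ext ⟨j, j'⟩ ⟨l, l'⟩
  simp [partialTraceLeft_apply, Fintype.sum_prod_type, Finset.sum_mul_sum]

theorem posSemidef_partialTraceLeft {𝕜 : Type*} [RCLike 𝕜] {E : Matrix (a × b) (a × b) 𝕜}
    (hE : E.PosSemidef) : (partialTraceLeft E).PosSemidef :=
  posSemidef_sum _ fun i _ => hE.submatrix (Prod.mk i)

end PartialTrace

section Kronecker

theorem trace_reindex_self {m n R : Type*} [Fintype m] [Fintype n] [AddCommMonoid R] (e : m ≃ n)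
    (M : Matrix m m R) : (reindex e e M).trace = M.trace :=
  e.symm.sum_comp fun i => M i i

theorem trace_reindex_kronecker_mul_reindex_kronecker {l m n R : Type*} [Fintype l] [Fintype m]
    [Fintype n] [CommSemiring R] (e : l × m ≃ n) (A B : Matrix l l R) (A' B' : Matrix m m R) :
    (reindex e e (A ⊗ₖ A') * reindex e e (B ⊗ₖ B')).trace = (A * B).trace * (A' * B').trace := by
  rw [reindex_apply, reindex_apply, submatrix_mul_equiv, ← mul_kronecker_mul, ← reindex_apply,
    trace_reindex_self, trace_kronecker]

theorem posSemidef_one_sub_kronecker {𝕜 m n : Type*} [RCLike 𝕜] [Finite m] [Finite n]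
    [DecidableEq m] [DecidableEq n] {X : Matrix m m 𝕜} {Y : Matrix n n 𝕜}
    (hX : X.PosSemidef) (hX_le : (1 - X).PosSemidef) (hY_le : (1 - Y).PosSemidef) :
    (1 - X ⊗ₖ Y).PosSemidef := by
  have h_split : 1 - X ⊗ₖ Y = (1 - X) ⊗ₖ 1 + X ⊗ₖ (1 - Y) := by
    rw [← one_kronecker_one]
    ext ⟨i, i'⟩ ⟨j, j'⟩
    simp only [Matrix.sub_apply, Matrix.add_apply, kronecker_apply]
    ring
  rw [h_split]
  exact (hX_le.kronecker .one).add (hX.kronecker hY_le)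

end Kronecker

namespace MinEntropyProgram

variable {𝕜 a b : Type*} [RCLike 𝕜]

section Primal

variable [Fintype b] [DecidableEq a]

/-- The objective values of the feasible points of the min-entropy program for `ρ`. -/
def primalValues (ρ : Matrix (a × b) (a × b) 𝕜) : Set ℝ :=
  {s | ∃ σ : Matrix b b 𝕜, σ.PosSemidef ∧ ((1 : Matrix a a 𝕜) ⊗ₖ σ - ρ).PosSemidef ∧
    s = RCLike.re σ.trace}

/-- The optimal value `m(ρ)` of the min-entropy program, so that `H∞(A|B) = -log m(ρ)`. -/
noncomputable def primalOptimum (ρ : Matrix (a × b) (a × b) 𝕜) : ℝ :=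
  sInf (primalValues ρ)

theorem nonneg_of_mem_primalValues {ρ : Matrix (a × b) (a × b) 𝕜} {s : ℝ}
    (hs : s ∈ primalValues ρ) : 0 ≤ s := by
  obtain ⟨σ, hσ, -, rfl⟩ := hs
  exact (RCLike.nonneg_iff.mp hσ.trace_nonneg).1

theorem bddBelow_primalValues (ρ : Matrix (a × b) (a × b) 𝕜) : BddBelow (primalValues ρ) :=
  ⟨0, fun _ => nonneg_of_mem_primalValues⟩

theorem primalValues_nonempty [Finite a] {ρ : Matrix (a × b) (a × b) 𝕜} (hρ : ρ.IsHermitian) :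
    (primalValues ρ).Nonempty := by
  classical
  obtain ⟨c, hc, h_le⟩ := exists_posSemidef_smul_one_sub hρ
  refine ⟨_, c • 1, PosSemidef.one.smul hc, ?_, rfl⟩
  rwa [kronecker_smul, one_kronecker_one]

theorem mul_mem_primalValues_smul {ρ : Matrix (a × b) (a × b) 𝕜} {c s : ℝ} (hc : 0 ≤ c)
    (hs : s ∈ primalValues ρ) : c * s ∈ primalValues (c • ρ) := by
  obtain ⟨σ, hσ, h_le, rfl⟩ := hs
  refine ⟨c • σ, hσ.smul hc, ?_, by rw [trace_smul, RCLike.smul_re]⟩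
  rw [kronecker_smul, ← smul_sub]
  exact h_le.smul hc

theorem add_mem_primalValues_add {ρ₁ ρ₂ : Matrix (a × b) (a × b) 𝕜} {s₁ s₂ : ℝ}
    (hs₁ : s₁ ∈ primalValues ρ₁) (hs₂ : s₂ ∈ primalValues ρ₂) :
    s₁ + s₂ ∈ primalValues (ρ₁ + ρ₂) := by
  obtain ⟨σ₁, hσ₁, h_le₁, rfl⟩ := hs₁
  obtain ⟨σ₂, hσ₂, h_le₂, rfl⟩ := hs₂
  refine ⟨σ₁ + σ₂, hσ₁.add hσ₂, ?_, by rw [trace_add, map_add]⟩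
  rw [kronecker_add, add_sub_add_comm]
  exact h_le₁.add h_le₂

theorem primalOptimum_le {ρ : Matrix (a × b) (a × b) 𝕜} {σ : Matrix b b 𝕜} (hσ : σ.PosSemidef)
    (h_le : ((1 : Matrix a a 𝕜) ⊗ₖ σ - ρ).PosSemidef) : primalOptimum ρ ≤ RCLike.re σ.trace :=
  csInf_le (bddBelow_primalValues ρ) ⟨σ, hσ, h_le, rfl⟩

open scoped Pointwise in
theorem primalOptimum_smul {c : ℝ} (hc : 0 < c) (ρ : Matrix (a × b) (a × b) 𝕜) :
    primalOptimum (c • ρ) = c * primalOptimum ρ := by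
  have h_values : primalValues (c • ρ) = c • primalValues ρ := by
    refine Set.Subset.antisymm (fun s hs => ?_) ?_
    · rw [Set.mem_smul_set_iff_inv_smul_mem₀ hc.ne', smul_eq_mul]
      simpa only [inv_smul_smul₀ hc.ne'] using
        mul_mem_primalValues_smul (inv_nonneg.mpr hc.le) hs
    · rintro _ ⟨s, hs, rfl⟩
      exact mul_mem_primalValues_smul hc.le hs
  rw [primalOptimum, h_values, Real.sInf_smul_of_nonneg hc.le, smul_eq_mul, primalOptimum]

open scoped Pointwise in
theorem primalOptimum_add_le [Finite a] {ρ₁ ρ₂ : Matrix (a × b) (a × b) 𝕜}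
    (hρ₁ : ρ₁.IsHermitian) (hρ₂ : ρ₂.IsHermitian) :
    primalOptimum (ρ₁ + ρ₂) ≤ primalOptimum ρ₁ + primalOptimum ρ₂ := by
  have h_subset : primalValues ρ₁ + primalValues ρ₂ ⊆ primalValues (ρ₁ + ρ₂) := by
    rintro _ ⟨s₁, hs₁, s₂, hs₂, rfl⟩
    exact add_mem_primalValues_add hs₁ hs₂
  have h_ne₁ := primalValues_nonempty hρ₁
  have h_ne₂ := primalValues_nonempty hρ₂
  calc primalOptimum (ρ₁ + ρ₂)
      ≤ sInf (primalValues ρ₁ + primalValues ρ₂) :=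
        csInf_le_csInf (bddBelow_primalValues _) (h_ne₁.add h_ne₂) h_subset
    _ = primalOptimum ρ₁ + primalOptimum ρ₂ :=
        csInf_add h_ne₁ (bddBelow_primalValues _) h_ne₂ (bddBelow_primalValues _)

theorem exists_isHermitian_re_trace_mul_le_primalOptimum [Fintype a]
    {ρ : Matrix (a × b) (a × b) 𝕜} (hρ : ρ.IsHermitian) :
    ∃ E : Matrix (a × b) (a × b) 𝕜, E.IsHermitian ∧
      (∀ H : Matrix (a × b) (a × b) 𝕜, H.IsHermitian →
        RCLike.re (E * H).trace ≤ primalOptimum H) ∧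
      RCLike.re (E * ρ).trace = primalOptimum ρ := by
  obtain ⟨g, hg_le, hg_eq⟩ := exists_linearMap_le_sublinear_apply_eq
    (N := fun H : selfAdjoint (Matrix (a × b) (a × b) 𝕜) => primalOptimum H.1)
    (fun c hc H => primalOptimum_smul hc H.1) (fun H K => primalOptimum_add_le H.2 K.2) ⟨ρ, hρ⟩
  obtain ⟨E, hE, hE_eq⟩ := exists_isHermitian_re_trace_mul_eq g
  exact ⟨E, hE, fun H hH => (hE_eq ⟨H, hH⟩).trans_le (hg_le _), (hE_eq ⟨ρ, hρ⟩).trans hg_eq⟩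

end Primal

section Dual

variable [Fintype a] [DecidableEq b]

/-- Feasibility for the dual program, which maximizes `Re Tr (E ρ)` over `E ≥ 0` with
`Tr_A E ≤ 1`. -/
structure IsDualFeasible (E : Matrix (a × b) (a × b) 𝕜) : Prop where
  posSemidef : E.PosSemidef
  one_sub_partialTraceLeft : (1 - partialTraceLeft E).PosSemidef

theorem IsDualFeasible.reindex_kronecker {a' b' : Type*} [Finite b] [Fintype a'] [Finite b']
    [DecidableEq b'] {E : Matrix (a × b) (a × b) 𝕜} {E' : Matrix (a' × b') (a' × b') 𝕜}
    (hE : IsDualFeasible E) (hE' : IsDualFeasible E') :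
    IsDualFeasible (reindex (Equiv.prodProdProdComm a b a' b')
      (Equiv.prodProdProdComm a b a' b') (E ⊗ₖ E')) where
  posSemidef := (hE.posSemidef.kronecker hE'.posSemidef).submatrix _
  one_sub_partialTraceLeft := by
    rw [partialTraceLeft_reindex_kronecker]
    exact posSemidef_one_sub_kronecker (posSemidef_partialTraceLeft hE.posSemidef)
      hE.one_sub_partialTraceLeft hE'.one_sub_partialTraceLeft

variable [Fintype b] [DecidableEq a]

theorem isDualFeasible_of_re_trace_mul_le_primalOptimum {E : Matrix (a × b) (a × b) 𝕜}
    (hE : E.IsHermitian)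
    (h_le : ∀ H : Matrix (a × b) (a × b) 𝕜, H.IsHermitian →
      RCLike.re (E * H).trace ≤ primalOptimum H) : IsDualFeasible E := by
  have hE_psd : E.PosSemidef := by
    refine posSemidef_of_re_trace_mul_nonneg hE fun Q hQ => ?_
    have h_neg := h_le (-Q) hQ.isHermitian.neg
    have h_zero : primalOptimum (-Q) ≤ RCLike.re (0 : Matrix b b 𝕜).trace :=
      primalOptimum_le .zero (by simpa using hQ)
    rw [mul_neg, trace_neg, map_neg] at h_neg
    rw [trace_zero, map_zero] at h_zero
    linarith
  refine ⟨hE_psd, posSemidef_of_re_trace_mul_nonneg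
    (isHermitian_one.sub (posSemidef_partialTraceLeft hE_psd).isHermitian) fun σ hσ => ?_⟩
  have h_kron := h_le (1 ⊗ₖ σ) (PosSemidef.one.kronecker hσ).isHermitian
  have h_opt : primalOptimum ((1 : Matrix a a 𝕜) ⊗ₖ σ) ≤ RCLike.re σ.trace :=
    primalOptimum_le hσ (by simpa using PosSemidef.zero)
  rw [trace_mul_one_kronecker] at h_kron
  rw [sub_mul, one_mul, trace_sub, map_sub]
  linarith

theorem exists_isDualFeasible_re_trace_mul_eq_primalOptimum {ρ : Matrix (a × b) (a × b) 𝕜}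
    (hρ : ρ.IsHermitian) :
    ∃ E : Matrix (a × b) (a × b) 𝕜, IsDualFeasible E ∧
      RCLike.re (E * ρ).trace = primalOptimum ρ := by
  obtain ⟨E, hE, h_le, h_eq⟩ := exists_isHermitian_re_trace_mul_le_primalOptimum hρ
  exact ⟨E, isDualFeasible_of_re_trace_mul_le_primalOptimum hE h_le, h_eq⟩

theorem IsDualFeasible.re_trace_mul_le {E ρ : Matrix (a × b) (a × b) 𝕜} {τ : Matrix b b 𝕜}
    (hE : IsDualFeasible E) (hτ : τ.PosSemidef)
    (h_le : ((1 : Matrix a a 𝕜) ⊗ₖ τ - ρ).PosSemidef) :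
    RCLike.re (E * ρ).trace ≤ RCLike.re τ.trace := by
  have h_primal := re_trace_mul_nonneg_of_posSemidef hE.posSemidef h_le
  have h_dual := re_trace_mul_nonneg_of_posSemidef hE.one_sub_partialTraceLeft hτ
  rw [mul_sub, trace_sub, map_sub, sub_nonneg] at h_primal
  rw [sub_mul, one_mul, trace_sub, map_sub, sub_nonneg] at h_dual
  calc RCLike.re (E * ρ).trace
      ≤ RCLike.re (E * ((1 : Matrix a a 𝕜) ⊗ₖ τ)).trace := h_primal
    _ = RCLike.re (partialTraceLeft E * τ).trace := by rw [trace_mul_one_kronecker]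
    _ ≤ RCLike.re τ.trace := h_dual

end Dual

end MinEntropyProgram

open MinEntropyProgram in
theorem stmt_16_general {𝕜 a b a' b' : Type*} [RCLike 𝕜]
    [Finite a] [Fintype b] [Finite a'] [Fintype b'] [DecidableEq a] [DecidableEq a']
    {ρ : Matrix (a × b) (a × b) 𝕜} {ρ' : Matrix (a' × b') (a' × b') 𝕜}
    (hρ : ρ.IsHermitian) (hρ' : ρ'.IsHermitian) {τ : Matrix (b × b') (b × b') 𝕜}
    (hτ : τ.PosSemidef)
    (h_le : ((1 : Matrix (a × a') (a × a') 𝕜) ⊗ₖ τ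
      - reindex (Equiv.prodProdProdComm a b a' b')
          (Equiv.prodProdProdComm a b a' b') (ρ ⊗ₖ ρ')).PosSemidef) :
    primalOptimum ρ * primalOptimum ρ' ≤ RCLike.re τ.trace := by
  classical
  cases nonempty_fintype a
  cases nonempty_fintype a'
  obtain ⟨E, hE, hE_opt⟩ := exists_isDualFeasible_re_trace_mul_eq_primalOptimum hρ
  obtain ⟨E', hE', hE'_opt⟩ := exists_isDualFeasible_re_trace_mul_eq_primalOptimum hρ'
  calc primalOptimum ρ * primalOptimum ρ'
      = RCLike.re ((E * ρ).trace * (E' * ρ').trace) := by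
        rw [RCLike.mul_re, im_trace_mul_eq_zero_of_isHermitian hE.posSemidef.isHermitian hρ,
          zero_mul, sub_zero, hE_opt, hE'_opt]
    _ = RCLike.re (reindex (Equiv.prodProdProdComm a b a' b') (Equiv.prodProdProdComm a b a' b')
          (E ⊗ₖ E') * reindex (Equiv.prodProdProdComm a b a' b')
          (Equiv.prodProdProdComm a b a' b') (ρ ⊗ₖ ρ')).trace := by
        rw [trace_reindex_kronecker_mul_reindex_kronecker]
    _ ≤ RCLike.re τ.trace := (hE.reindex_kronecker hE').re_trace_mul_le hτ h_le

/-- Tensoring feasible SDP solutions: the ε = 0 additivity of the conditional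
min-entropy, `m(ρ ⊗ ρ′) ≥ m(ρ)·m(ρ′)`, where
`m(ρ) = inf { Re Tr σ : σ ≥ 0, 1_a ⊗ σ - ρ ≥ 0 }`. -/
theorem stmt_16 (a b a' b' : Type)
    [Fintype a] [Fintype b] [Fintype a'] [Fintype b']
    [DecidableEq a] [DecidableEq b] [DecidableEq a'] [DecidableEq b']
    [Nonempty a] [Nonempty b] [Nonempty a'] [Nonempty b']
    (ρ : Matrix (a × b) (a × b) ℂ) (ρ' : Matrix (a' × b') (a' × b') ℂ)
    (hρ : ρ.PosSemidef) (hρ' : ρ'.PosSemidef) :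
    ∀ τ : Matrix (b × b') (b × b') ℂ, τ.PosSemidef →
      ((1 : Matrix (a × a') (a × a') ℂ) ⊗ₖ τ
        - Matrix.reindex (Equiv.prodProdProdComm a b a' b')
            (Equiv.prodProdProdComm a b a' b') (ρ ⊗ₖ ρ')).PosSemidef →
      (τ.trace).re ≥
        sInf {s : ℝ | ∃ σ : Matrix b b ℂ, σ.PosSemidef
            ∧ ((1 : Matrix a a ℂ) ⊗ₖ σ - ρ).PosSemidef ∧ s = (σ.trace).re}
        * sInf {s : ℝ | ∃ σ' : Matrix b' b' ℂ, σ'.PosSemidef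
            ∧ ((1 : Matrix a' a' ℂ) ⊗ₖ σ' - ρ').PosSemidef ∧ s = (σ'.trace).re} := by
  exact fun _ hτ h_le => stmt_16_general hρ.isHermitian hρ'.isHermitian hτ h_le
end
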